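/- If v ∈ V_8 is a nonzero binary octic with exactly k distinct complex roots (counted projectively), then the dimension of the GL(2,ℝ)-orbit root-type stratum of v in V_8 ≅ ℝ^9 (the set of all octics with the same root multiplicity and conjugation pattern) equals k + 1. -/

import Mathlib

open MvPolynomial

noncomputable section

/-- Complexification of a real binary form. -/
def mapC (v : MvPolynomial (Fin 2) ℝ) : MvPolynomial (Fin 2) ℂ :=
  MvPolynomial.map (algebraMap ℝ ℂ) v

/-- The linear form w·x - z·y corresponding to the projective root [z:w]. -/
def lin (z w : ℂ) : MvPolynomial (Fin 2) ℂ :=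
  MvPolynomial.C w * X 0 - MvPolynomial.C z * X 1

/-- The binary octic with coefficient vector x ∈ ℝ⁹ (binomial basis). -/
def polyOf (x : Fin 9 → ℝ) : MvPolynomial (Fin 2) ℝ :=
  ∑ k : Fin 9, MvPolynomial.C (x k * (Nat.choose 8 k : ℝ)) *
    X 0 ^ (8 - (k : ℕ)) * X 1 ^ (k : ℕ)

/-- Roots i and j are a complex-conjugate pair (projectively). -/
def conjPaired {m : ℕ} (z w : Fin m → ℂ) (i j : Fin m) : Prop :=
  (starRingEnd ℂ) (z i) * w j = (starRingEnd ℂ) (w i) * z j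

/-- The root-type stratum: all coefficient vectors x ∈ ℝ⁹ whose octic has the
same root multiplicity pattern r and the same conjugation pattern as the
reference root data (z, w). -/
def stratum (m : ℕ) (r : Fin m → ℕ) (z w : Fin m → ℂ) : Set (Fin 9 → ℝ) :=
  {x | ∃ (c' : ℂ) (z' w' : Fin m → ℂ), c' ≠ 0 ∧
    (∀ i, ¬(z' i = 0 ∧ w' i = 0)) ∧
    (∀ i j, i ≠ j → z' i * w' j ≠ z' j * w' i) ∧
    mapC (polyOf x) = MvPolynomial.C c' * ∏ i, (lin (z' i) (w' i)) ^ (r i) ∧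
    (∀ i j, conjPaired z w i j ↔ conjPaired z' w' i j)}

open Filter Topology
open scoped ComplexConjugate

/-!
Conjugation permutes the roots of a real form by an involution `σ`. Normalizing the representatives
of the roots turns this into an equality of vectors, so that moving the roots and the scale
compatibly with `σ` stays inside real forms and gives a polynomial chart with one real parameter
for each root and one for the scale. A tangent vector of this chart is divisible by
`∏ lin (u i) ^ (r i - 1)`; evaluating the quotient at the roots recovers the velocities of the
roots, hence the chart is an immersion. Finally, the roots depend continuously on the form, by
unique factorization and compactness of the projective line, so every nearby form in the stratum
lies in the image of the chart.
-/

section Bracket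

/-- The determinant-like pairing of two vectors of `ℂ²`: it vanishes exactly when they represent
the same point of the projective line, and `bracket a b` is the value at `b` of the linear form
`lin (a 0) (a 1)` with root `a`. -/
def bracket (a b : Fin 2 → ℂ) : ℂ := a 1 * b 0 - a 0 * b 1

/-- A vector transverse to `a ≠ 0`; it spans the tangent direction at the point `a` of the
projective line. -/
def perp (a : Fin 2 → ℂ) : Fin 2 → ℂ := ![-conj (a 1), conj (a 0)]

variable (a b c : Fin 2 → ℂ) (t : ℂ)

lemma bracket_self : bracket a a = 0 := by
  simp only [bracket]; ring

lemma bracket_swap : bracket a b = -bracket b a := by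
  simp only [bracket]; ring

lemma bracket_add_left : bracket (a + b) c = bracket a c + bracket b c := by
  simp only [bracket, Pi.add_apply]; ring

lemma bracket_smul_left : bracket (t • a) b = t * bracket a b := by
  simp only [bracket, Pi.smul_apply, smul_eq_mul]; ring

lemma bracket_smul_right : bracket a (t • b) = t * bracket a b := by
  simp only [bracket, Pi.smul_apply, smul_eq_mul]; ring

lemma bracket_star_star : bracket (star a) (star b) = conj (bracket a b) := by
  simp [bracket]

lemma perp_star : perp (star a) = star (perp a) := by
  ext i; fin_cases i <;> simp [perp]

lemma bracket_smul_eq_add :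
    bracket a b • c = bracket c b • a + bracket a c • b := by
  ext i; fin_cases i <;> simp [bracket] <;> ring

lemma continuous_bracket : Continuous fun p : (Fin 2 → ℂ) × (Fin 2 → ℂ) => bracket p.1 p.2 := by
  unfold bracket; fun_prop

variable {a b c}

lemma bracket_eq_zero_comm : bracket a b = 0 ↔ bracket b a = 0 := by
  rw [bracket_swap, neg_eq_zero]

lemma bracket_perp_ne_zero (ha : a ≠ 0) : bracket a (perp a) ≠ 0 := by
  have heq : bracket a (perp a) = -((‖a 0‖ ^ 2 + ‖a 1‖ ^ 2 : ℝ) : ℂ) := by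
    push_cast
    rw [← Complex.mul_conj', ← Complex.mul_conj']
    simp only [bracket, perp, Matrix.cons_val_zero, Matrix.cons_val_one]
    ring
  rw [heq, neg_ne_zero, Complex.ofReal_ne_zero]
  contrapose! ha
  have h₀ : ‖a 0‖ = 0 := by nlinarith [sq_nonneg ‖a 0‖, sq_nonneg ‖a 1‖]
  have h₁ : ‖a 1‖ = 0 := by nlinarith [sq_nonneg ‖a 0‖, sq_nonneg ‖a 1‖]
  ext i; fin_cases i
  exacts [norm_eq_zero.1 h₀, norm_eq_zero.1 h₁]

lemma exists_eq_smul_of_bracket_eq_zero (ha : a ≠ 0) (h : bracket a b = 0) :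
    ∃ l : ℂ, b = l • a := by
  have h' := bracket_smul_eq_add a (perp a) b
  rw [h, zero_smul, add_zero] at h'
  refine ⟨(bracket a (perp a))⁻¹ * bracket b (perp a), ?_⟩
  rw [mul_smul, ← h', inv_smul_smul₀ (bracket_perp_ne_zero ha)]

lemma exists_ne_zero_smul_of_bracket_eq_zero (ha : a ≠ 0) (hb : b ≠ 0) (h : bracket a b = 0) :
    ∃ l : ℂ, l ≠ 0 ∧ b = l • a := by
  obtain ⟨l, rfl⟩ := exists_eq_smul_of_bracket_eq_zero ha h
  exact ⟨l, left_ne_zero_of_smul hb, rfl⟩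

lemma bracket_eq_zero_trans (hb : b ≠ 0) (hab : bracket a b = 0) (hbc : bracket b c = 0) :
    bracket a c = 0 := by
  obtain ⟨l, rfl⟩ := exists_eq_smul_of_bracket_eq_zero hb hbc
  rw [bracket_smul_right, hab, mul_zero]

end Bracket

section LinearForm

variable {a b : Fin 2 → ℂ}

lemma eval_lin (a v : Fin 2 → ℂ) : eval v (lin (a 0) (a 1)) = bracket a v := by
  simp [lin, bracket]

lemma map_conj_lin (a : Fin 2 → ℂ) :
    MvPolynomial.map (starRingEnd ℂ) (lin (a 0) (a 1)) = lin (star a 0) (star a 1) := by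
  simp [lin]

lemma lin_smul (t : ℂ) (a : Fin 2 → ℂ) :
    lin ((t • a) 0) ((t • a) 1) = C t * lin (a 0) (a 1) := by
  simp only [lin, Pi.smul_apply, smul_eq_mul, C_mul]; ring

lemma isHomogeneous_lin (z w : ℂ) : (lin z w).IsHomogeneous 1 :=
  (isHomogeneous_C_mul_X _ _).sub (isHomogeneous_C_mul_X _ _)

lemma lin_ne_zero (ha : a ≠ 0) : lin (a 0) (a 1) ≠ 0 := fun h =>
  bracket_perp_ne_zero ha (by rw [← eval_lin, h, map_zero])

lemma prime_lin (ha : a ≠ 0) : Prime (lin (a 0) (a 1)) := by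
  refine (irreducible_of_totalDegree_eq_one
    ((isHomogeneous_lin _ _).totalDegree (lin_ne_zero ha)) fun x hx => ?_).prime
  rw [isUnit_iff_ne_zero]
  rintro rfl
  refine lin_ne_zero ha (MvPolynomial.ext _ _ fun n => ?_)
  rw [zero_dvd_iff.1 (hx n), coeff_zero]

lemma emultiplicity_lin (ha : a ≠ 0) (hb : b ≠ 0) [Decidable (bracket a b = 0)] :
    emultiplicity (lin (a 0) (a 1)) (lin (b 0) (b 1)) = if bracket a b = 0 then 1 else 0 := by
  split_ifs with h
  · obtain ⟨l, hl, rfl⟩ := exists_ne_zero_smul_of_bracket_eq_zero ha hb h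
    have hassoc : Associated (lin (a 0) (a 1)) (lin ((l • a) 0) ((l • a) 1)) := by
      rw [lin_smul]
      exact associated_unit_mul_right _ _ (hl.isUnit.map C)
    rw [← emultiplicity_eq_of_associated_right hassoc]
    have hp := prime_lin ha
    exact (FiniteMultiplicity.of_prime_left hp hp.ne_zero).emultiplicity_self
  · refine emultiplicity_eq_zero.2 fun ⟨q, hq⟩ => h ?_
    rw [bracket_swap, ← eval_lin b, hq, map_mul, eval_lin, bracket_self, zero_mul, neg_zero]

end LinearForm

section RootProduct

variable {ι : Type*}

/-- The vectors `u i` represent pairwise distinct points of the projective line. -/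
structure DistinctRoots (u : ι → Fin 2 → ℂ) : Prop where
  ne_zero : ∀ i, u i ≠ 0
  bracket_ne_zero : Pairwise fun i j => bracket (u i) (u j) ≠ 0

lemma DistinctRoots.eq_of_bracket_eq_zero {u : ι → Fin 2 → ℂ} (hu : DistinctRoots u) {i j : ι}
    (h : bracket (u i) (u j) = 0) : i = j :=
  not_imp_not.1 (fun hij => hu.bracket_ne_zero hij) h

lemma DistinctRoots.smul {u : ι → Fin 2 → ℂ} (hu : DistinctRoots u) {α : ι → ℂ}
    (hα : ∀ i, α i ≠ 0) : DistinctRoots fun i => α i • u i where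
  ne_zero i := smul_ne_zero (hα i) (hu.ne_zero i)
  bracket_ne_zero i j hij := by
    simp only [bracket_smul_left, bracket_smul_right]
    exact mul_ne_zero (hα j) (mul_ne_zero (hα i) (hu.bracket_ne_zero hij))

lemma DistinctRoots.bracket_star_eq_zero_iff {u : ι → Fin 2 → ℂ} (hu : DistinctRoots u)
    {σ : ι → ι} (hσ : ∀ i, bracket (star (u i)) (u (σ i)) = 0) (i j : ι) :
    bracket (star (u i)) (u j) = 0 ↔ σ i = j := by
  refine ⟨fun h => hu.eq_of_bracket_eq_zero ?_, fun h => h ▸ hσ i⟩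
  exact bracket_eq_zero_trans (star_ne_zero.2 (hu.ne_zero i)) (bracket_eq_zero_comm.1 (hσ i)) h

lemma DistinctRoots.eventually [Finite ι] {u : ι → Fin 2 → ℂ} (hu : DistinctRoots u) :
    ∀ᶠ w in 𝓝 u, DistinctRoots w := by
  have h_apply (i : ι) : Tendsto (fun w : ι → Fin 2 → ℂ => w i) (𝓝 u) (𝓝 (u i)) :=
    (continuous_apply i).tendsto u
  have hne : ∀ᶠ w in 𝓝 u, ∀ i, w i ≠ 0 :=
    eventually_all.2 fun i => (h_apply i).eventually_ne (hu.ne_zero i)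
  have hbr : ∀ᶠ w in 𝓝 u, ∀ i j, i ≠ j → bracket (w i) (w j) ≠ 0 :=
    eventually_all.2 fun i => eventually_all.2 fun j => eventually_imp_distrib_left.2 fun hij =>
      ((continuous_bracket.tendsto _).comp
        ((h_apply i).prodMk_nhds (h_apply j))).eventually_ne (hu.bracket_ne_zero hij)
  filter_upwards [hne, hbr] with w h₀ h₁ using ⟨h₀, h₁⟩

variable [Fintype ι] (r : ι → ℕ)

/-- The form `∏ lin (u i) ^ r i`, with roots `u i` of multiplicity `r i`. Every binary form over
`ℂ` is a constant multiple of such a product. -/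
def rootProduct (u : ι → Fin 2 → ℂ) : MvPolynomial (Fin 2) ℂ := ∏ i, lin (u i 0) (u i 1) ^ r i

lemma eval_rootProduct (u : ι → Fin 2 → ℂ) (v : Fin 2 → ℂ) :
    eval v (rootProduct r u) = ∏ i, bracket (u i) v ^ r i := by
  simp only [rootProduct, map_prod, map_pow, eval_lin]

lemma map_conj_rootProduct (u : ι → Fin 2 → ℂ) :
    MvPolynomial.map (starRingEnd ℂ) (rootProduct r u) = rootProduct r (star u) := by
  simp only [rootProduct, map_prod, map_pow, map_conj_lin, Pi.star_apply]

lemma rootProduct_smul (α : ι → ℂ) (u : ι → Fin 2 → ℂ) :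
    rootProduct r (fun i => α i • u i) = C (∏ i, α i ^ r i) * rootProduct r u := by
  simp only [rootProduct, lin_smul, mul_pow, Finset.prod_mul_distrib, map_prod, map_pow]

lemma rootProduct_comp_perm {ρ : Equiv.Perm ι} (hρ : ∀ i, r (ρ i) = r i) (u : ι → Fin 2 → ℂ) :
    rootProduct r (u ∘ ρ) = rootProduct r u :=
  Fintype.prod_equiv ρ _ _ fun i => by rw [hρ, Function.comp_apply]

lemma isHomogeneous_rootProduct (u : ι → Fin 2 → ℂ) :
    (rootProduct r u).IsHomogeneous (∑ i, r i) := by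
  simpa [rootProduct] using IsHomogeneous.prod Finset.univ _ _ fun i _ =>
    (isHomogeneous_lin (u i 0) (u i 1)).pow (r i)

lemma rootProduct_ne_zero {u : ι → Fin 2 → ℂ} (hu : ∀ i, u i ≠ 0) : rootProduct r u ≠ 0 :=
  Finset.prod_ne_zero_iff.2 fun i _ => pow_ne_zero _ (lin_ne_zero (hu i))

lemma exists_eval_rootProduct_ne_zero {u : ι → Fin 2 → ℂ} (hu : ∀ i, u i ≠ 0) :
    ∃ v, eval v (rootProduct r u) ≠ 0 := by
  by_contra! h
  exact rootProduct_ne_zero r hu (MvPolynomial.funext fun v => by rw [h, map_zero])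

lemma continuous_eval_rootProduct (v : Fin 2 → ℂ) :
    Continuous fun u : ι → Fin 2 → ℂ => eval v (rootProduct r u) := by
  simp only [eval_rootProduct, bracket]; fun_prop

open Classical in
lemma emultiplicity_rootProduct {a : Fin 2 → ℂ} (ha : a ≠ 0) {c : ℂ} (hc : c ≠ 0)
    {u : ι → Fin 2 → ℂ} (hu : ∀ i, u i ≠ 0) :
    emultiplicity (lin (a 0) (a 1)) (C c * rootProduct r u) =
      ((∑ i with bracket a (u i) = 0, r i : ℕ) : ℕ∞) := by
  have hp := prime_lin ha
  rw [emultiplicity_mul hp, emultiplicity_of_isUnit_right hp.not_isUnit (hc.isUnit.map C), zero_add,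
    rootProduct, Finset.emultiplicity_prod hp, Finset.sum_filter, Nat.cast_sum]
  refine Finset.sum_congr rfl fun i _ => ?_
  rw [emultiplicity_pow hp, emultiplicity_lin ha (hu i)]
  split_ifs <;> simp

theorem exists_perm_of_rootProduct_eq {r : ι → ℕ} (hr : ∀ i, 0 < r i) {u w : ι → Fin 2 → ℂ}
    (hu : DistinctRoots u) (hw : ∀ i, w i ≠ 0) {c c' : ℂ} (hc : c ≠ 0) (hc' : c' ≠ 0)
    (h : C c * rootProduct r u = C c' * rootProduct r w) :
    ∃ ρ : Equiv.Perm ι, ∀ i, bracket (u i) (w (ρ i)) = 0 ∧ r (ρ i) = r i := by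
  classical
  have hmult (i : ι) : ∑ j with bracket (u i) (w j) = 0, r j = r i := by
    have := emultiplicity_rootProduct r (hu.ne_zero i) hc' hw
    rw [← h, emultiplicity_rootProduct r (hu.ne_zero i) hc hu.ne_zero, Nat.cast_inj] at this
    rw [← this]
    refine Finset.sum_eq_single_of_mem i (by simp [bracket_self]) fun j hj hji => ?_
    exact absurd (hu.eq_of_bracket_eq_zero (Finset.mem_filter.1 hj).2) hji.symm
  have hroot (i : ι) : ∃ j, bracket (u i) (w j) = 0 := by
    by_contra! hi
    exact (hr i).ne' (by simp [← hmult i, hi])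
  choose ρ hρ using hroot
  have hinj {i j k : ι} (hi : bracket (u i) (w k) = 0) (hj : bracket (u j) (w k) = 0) : i = j :=
    hu.eq_of_bracket_eq_zero (bracket_eq_zero_trans (hw k) hi (bracket_eq_zero_comm.1 hj))
  have hbij : Function.Bijective ρ := Finite.injective_iff_bijective.1
    fun i j hij => hinj (hρ i) (hij ▸ hρ j)
  refine ⟨Equiv.ofBijective ρ hbij, fun i => ⟨hρ i, ?_⟩⟩
  rw [Equiv.ofBijective_apply, ← hmult i]
  refine (Finset.sum_eq_single_of_mem (ρ i) (by simp [hρ i]) fun j hj hji => ?_).symm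
  obtain ⟨k, rfl⟩ := hbij.2 j
  exact absurd (congrArg ρ (hinj (hρ k) (Finset.mem_filter.1 hj).2)) hji

end RootProduct

section BinaryForm

variable {d : ℕ}

/-- The complexification of the real binary form of degree `d` with coefficient vector `x` in the
binomial basis; for `d = 8` it is `mapC (polyOf x)`. -/
def complexForm (x : Fin (d + 1) → ℝ) : MvPolynomial (Fin 2) ℂ :=
  ∑ k : Fin (d + 1), C ((x k : ℂ) * d.choose k) * X 0 ^ (d - k : ℕ) * X 1 ^ (k : ℕ)

lemma mapC_polyOf (x : Fin 9 → ℝ) : mapC (polyOf x) = complexForm x := by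
  simp [mapC, polyOf, complexForm]

lemma eval_complexForm (v : Fin 2 → ℂ) (x : Fin (d + 1) → ℝ) :
    eval v (complexForm x) =
      ∑ k : Fin (d + 1), (x k : ℂ) * d.choose k * v 0 ^ (d - k : ℕ) * v 1 ^ (k : ℕ) := by
  simp [complexForm]

lemma isHomogeneous_complexForm (x : Fin (d + 1) → ℝ) : (complexForm x).IsHomogeneous d := by
  refine IsHomogeneous.sum _ _ _ fun k _ => ?_
  convert ((isHomogeneous_C _ _).mul (isHomogeneous_X_pow 0 (d - k))).mul
    (isHomogeneous_X_pow (1 : Fin 2) (k : ℕ)) using 1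
  omega

lemma map_conj_complexForm (x : Fin (d + 1) → ℝ) :
    MvPolynomial.map (starRingEnd ℂ) (complexForm x) = complexForm x := by
  simp [complexForm]

/-- Evaluation at `v ∈ ℂ²` as a function of the coefficient vector. -/
def evalForm (v : Fin 2 → ℂ) : (Fin (d + 1) → ℝ) →L[ℝ] ℂ :=
  LinearMap.toContinuousLinearMap
    { toFun := fun x => eval v (complexForm x)
      map_add' := fun x y => by
        simp only [eval_complexForm, Pi.add_apply, Complex.ofReal_add, add_mul,
          Finset.sum_add_distrib]
      map_smul' := fun t x => by
        simp only [eval_complexForm, Pi.smul_apply, smul_eq_mul, Complex.ofReal_mul, mul_assoc,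
          RingHom.id_apply, Complex.real_smul, Finset.mul_sum] }

lemma evalForm_apply (v : Fin 2 → ℂ) (x : Fin (d + 1) → ℝ) :
    evalForm v x = eval v (complexForm x) := rfl

lemma eq_zero_of_evalForm_eq_zero {x : Fin (d + 1) → ℝ}
    (h : ∀ j : Fin (d + 1), evalForm ![1, (j : ℂ)] x = 0) : x = 0 := by
  have hj : Function.Injective fun j : Fin (d + 1) => (j : ℂ) :=
    fun i j hij => Fin.ext (Nat.cast_injective hij)
  have hx := Matrix.eq_zero_of_forall_index_sum_pow_mul_eq_zero hj
    (v := fun k => (x k : ℂ) * d.choose k) fun j => by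
      simpa [evalForm_apply, eval_complexForm, mul_comm] using h j
  ext k
  have hchoose : (d.choose k : ℂ) ≠ 0 := Nat.cast_ne_zero.2 (Nat.choose_pos k.is_le).ne'
  exact Complex.ofReal_eq_zero.1 ((mul_eq_zero.1 (congrFun hx k)).resolve_right hchoose)

lemma complexForm_injective : Function.Injective (complexForm (d := d)) := fun x y hxy =>
  sub_eq_zero.1 <| eq_zero_of_evalForm_eq_zero fun j => by
    rw [map_sub, evalForm_apply, evalForm_apply, hxy, sub_self]

lemma contDiff_of_contDiff_evalForm {E : Type*} [NormedAddCommGroup E] [NormedSpace ℝ E]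
    {n : WithTop ℕ∞} {f : E → Fin (d + 1) → ℝ}
    (h : ∀ v, ContDiff ℝ n fun p => evalForm v (f p)) : ContDiff ℝ n f := by
  let L : (Fin (d + 1) → ℝ) →ₗ[ℝ] Fin (d + 1) → ℂ :=
    LinearMap.pi fun j => (evalForm ![1, (j : ℂ)]).toLinearMap
  have hL : LinearMap.ker L = ⊥ := LinearMap.ker_eq_bot'.2 fun x hx =>
    eq_zero_of_evalForm_eq_zero (congrFun hx)
  obtain ⟨M, hM⟩ := L.exists_leftInverse_of_injective hL
  have hf : f = fun p => M.toContinuousLinearMap fun j => evalForm ![1, (j : ℂ)] (f p) :=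
    funext fun p => (LinearMap.congr_fun hM (f p)).symm
  rw [hf]
  exact M.toContinuousLinearMap.contDiff.comp (contDiff_pi.2 fun j => h _)

/-- The binomial coefficient vector of a form of degree `d` with real coefficients. -/
def realCoeffs (d : ℕ) (P : MvPolynomial (Fin 2) ℂ) (k : Fin (d + 1)) : ℝ :=
  (P.coeff (Finsupp.single 0 (d - k : ℕ) + Finsupp.single 1 (k : ℕ))).re / d.choose k

lemma coeff_complexForm (x : Fin (d + 1) → ℝ) (k : Fin (d + 1)) :
    (complexForm x).coeff (Finsupp.single 0 (d - k : ℕ) + Finsupp.single 1 (k : ℕ)) =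
      x k * d.choose k := by
  have hterm (j : Fin (d + 1)) : C ((x j : ℂ) * d.choose j) * X 0 ^ (d - j : ℕ) * X 1 ^ (j : ℕ) =
      monomial (Finsupp.single (0 : Fin 2) (d - j : ℕ) + Finsupp.single 1 (j : ℕ))
        ((x j : ℂ) * d.choose j) := by
    rw [X_pow_eq_monomial, X_pow_eq_monomial, C_mul_monomial, monomial_mul, mul_one, mul_one]
  simp only [complexForm, hterm, coeff_sum]
  rw [Finset.sum_eq_single_of_mem k (Finset.mem_univ k), coeff_monomial, if_pos rfl]
  refine fun j _ hjk => (coeff_monomial _ _ _).trans (if_neg fun h => hjk (Fin.ext ?_))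
  simpa using DFunLike.congr_fun h 1

lemma complexForm_realCoeffs {P : MvPolynomial (Fin 2) ℂ} (hP : P.IsHomogeneous d)
    (hconj : MvPolynomial.map (starRingEnd ℂ) P = P) : complexForm (realCoeffs d P) = P := by
  ext1 n
  by_cases hn : n.degree = d
  · have hsum : n 0 + n 1 = d := by rw [← hn, Finsupp.degree_eq_sum, Fin.sum_univ_two]
    have hreal : ((P.coeff n).re : ℂ) = P.coeff n :=
      Complex.conj_eq_iff_re.1 (by rw [← coeff_map, hconj])
    let k : Fin (d + 1) := ⟨n 1, by omega⟩
    have hk : Finsupp.single 0 (d - k : ℕ) + Finsupp.single 1 (k : ℕ) = n := by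
      ext i; fin_cases i <;> simp [k, ← hsum]
    have hchoose : (d.choose k : ℂ) ≠ 0 := Nat.cast_ne_zero.2 (Nat.choose_pos k.is_le).ne'
    have hcoeff := coeff_complexForm (realCoeffs d P) k
    rw [hk] at hcoeff
    rw [hcoeff, realCoeffs, hk, Complex.ofReal_div, Complex.ofReal_natCast,
      div_mul_cancel₀ _ hchoose, hreal]
  · rw [(isHomogeneous_complexForm _).coeff_eq_zero hn, hP.coeff_eq_zero hn]

end BinaryForm

section Stratum

variable {ι : Type*} [Fintype ι] {d : ℕ} {r : ι → ℕ} {σ : Equiv.Perm ι} {x : Fin (d + 1) → ℝ}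
  {u w : ι → Fin 2 → ℂ}

/-- The root-type stratum in degree `d`: the coefficient vectors of the nonzero forms whose roots
can be labelled by `ι` with multiplicities `r`, so that `paired i j` says that the roots `i` and
`j` are conjugate to each other. -/
def rootStratum (d : ℕ) (r : ι → ℕ) (paired : ι → ι → Prop) : Set (Fin (d + 1) → ℝ) :=
  {x | ∃ (c : ℂ) (u : ι → Fin 2 → ℂ), c ≠ 0 ∧ DistinctRoots u ∧
    complexForm x = C c * rootProduct r u ∧
    ∀ i j, paired i j ↔ bracket (star (u i)) (u j) = 0}

lemma conjPaired_iff {m : ℕ} (u : Fin m → Fin 2 → ℂ) (i j : Fin m) :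
    conjPaired (fun i => u i 0) (fun i => u i 1) i j ↔ bracket (star (u i)) (u j) = 0 := by
  rw [bracket, sub_eq_zero]
  exact eq_comm

lemma stratum_eq_rootStratum (m : ℕ) (r : Fin m → ℕ) (z w : Fin m → ℂ) :
    stratum m r z w = rootStratum 8 r (conjPaired z w) := by
  ext x
  simp only [stratum, rootStratum, Set.mem_ofPred_eq, mapC_polyOf]
  constructor
  · rintro ⟨c, z', w', hc, hne, hdist, hx, hconj⟩
    refine ⟨c, fun i => ![z' i, w' i], hc, ⟨fun i h => hne i ?_, fun i j hij h => ?_⟩, hx,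
      fun i j => (hconj i j).trans (conjPaired_iff (fun i => ![z' i, w' i]) i j)⟩
    · exact ⟨congrFun h 0, congrFun h 1⟩
    · exact hdist j i hij.symm (sub_eq_zero.1 (by simpa [bracket, mul_comm] using h))
  · rintro ⟨c, u, hc, hu, hx, hconj⟩
    refine ⟨c, fun i => u i 0, fun i => u i 1, hc, fun i h => hu.ne_zero i ?_, fun i j hij h => ?_,
      hx, fun i j => (hconj i j).trans (conjPaired_iff u i j).symm⟩
    · ext k; fin_cases k
      exacts [h.1, h.2]
    · exact hu.bracket_ne_zero hij.symm (sub_eq_zero.2 (by simpa only [mul_comm] using h))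

lemma sum_mult_eq_degree (hu : ∀ i, u i ≠ 0) {c : ℂ} (hc : c ≠ 0)
    (hx : complexForm x = C c * rootProduct r u) : ∑ i, r i = d := by
  have hhom : (complexForm x).IsHomogeneous (∑ i, r i) := by
    simpa [hx] using (isHomogeneous_C _ c).mul (isHomogeneous_rootProduct r u)
  refine hhom.inj_right (isHomogeneous_complexForm x) ?_
  rw [hx]
  exact mul_ne_zero (C_ne_zero.2 hc) (rootProduct_ne_zero r hu)

/-- The vectors `w i` represent the roots of the form with coefficients `x`, with multiplicities
`r i`, and conjugation permutes the represented points by `σ`. -/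
structure IsRootLabelling (r : ι → ℕ) (σ : Equiv.Perm ι) (x : Fin (d + 1) → ℝ)
    (w : ι → Fin 2 → ℂ) : Prop where
  ne_zero : ∀ i, w i ≠ 0
  bracket_star : ∀ i, bracket (star (w i)) (w (σ i)) = 0
  exists_scale : ∃ c : ℂ, c ≠ 0 ∧ complexForm x = C c * rootProduct r w

lemma IsRootLabelling.smul (h : IsRootLabelling r σ x w) {α : ι → ℂ} (hα : ∀ i, α i ≠ 0) :
    IsRootLabelling r σ x fun i => α i • w i where
  ne_zero i := smul_ne_zero (hα i) (h.ne_zero i)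
  bracket_star i := by
    rw [star_smul, bracket_smul_left, bracket_smul_right, h.bracket_star, mul_zero, mul_zero]
  exists_scale := by
    obtain ⟨c, hc, hx⟩ := h.exists_scale
    have hprod : ∏ i, α i ^ r i ≠ 0 := Finset.prod_ne_zero_iff.2 fun i _ => pow_ne_zero _ (hα i)
    refine ⟨c / ∏ i, α i ^ r i, div_ne_zero hc hprod, ?_⟩
    rw [rootProduct_smul, ← mul_assoc, ← C_mul, div_mul_cancel₀ c hprod, hx]

lemma IsRootLabelling.comp_perm (h : IsRootLabelling r σ x w) {ρ : Equiv.Perm ι}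
    (hρ : ∀ i, r (ρ i) = r i) (hσ : ∀ i, ρ (σ i) = σ (ρ i)) :
    IsRootLabelling r σ x (w ∘ ρ) where
  ne_zero i := h.ne_zero (ρ i)
  bracket_star i := by
    rw [Function.comp_apply, Function.comp_apply, hσ, h.bracket_star]
  exists_scale := by
    rw [rootProduct_comp_perm r hρ]
    exact h.exists_scale

lemma IsRootLabelling.complexForm_ne_zero (h : IsRootLabelling r σ x w) : complexForm x ≠ 0 := by
  obtain ⟨c, hc, hx⟩ := h.exists_scale
  rw [hx]
  exact mul_ne_zero (C_ne_zero.2 hc) (rootProduct_ne_zero r h.ne_zero)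

lemma IsRootLabelling.exists_perm (hr : ∀ i, 0 < r i) (h : IsRootLabelling r σ x u)
    (hu : DistinctRoots u) (h' : IsRootLabelling r σ x w) :
    ∃ ρ : Equiv.Perm ι,
      (∀ i, bracket (u i) (w (ρ i)) = 0) ∧ (∀ i, r (ρ i) = r i) ∧ ∀ i, ρ (σ i) = σ (ρ i) := by
  obtain ⟨c, hc, hxu⟩ := h.exists_scale
  obtain ⟨c', hc', hxw⟩ := h'.exists_scale
  obtain ⟨ρ, hρ⟩ := exists_perm_of_rootProduct_eq hr hu h'.ne_zero hc hc' (hxu.symm.trans hxw)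
  refine ⟨ρ, fun i => (hρ i).1, fun i => (hρ i).2, fun i => ?_⟩
  obtain ⟨j, hj⟩ := ρ.surjective (σ (ρ i))
  have hstar : bracket (star (u i)) (star (w (ρ i))) = 0 := by
    rw [bracket_star_star, (hρ i).1, map_zero]
  have hij : bracket (star (u i)) (w (ρ j)) = 0 :=
    bracket_eq_zero_trans (star_ne_zero.2 (h'.ne_zero _)) hstar (hj ▸ h'.bracket_star (ρ i))
  have huj : bracket (star (u i)) (u j) = 0 :=
    bracket_eq_zero_trans (h'.ne_zero _) hij (bracket_eq_zero_comm.1 (hρ j).1)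
  rw [← hj, (hu.bracket_star_eq_zero_iff h.bracket_star i j).1 huj]

lemma exists_isRootLabelling_of_mem_rootStratum (hr : ∀ i, 0 < r i) {paired : ι → ι → Prop}
    (hx : x ∈ rootStratum d r paired) :
    ∃ (σ : Equiv.Perm ι) (u : ι → Fin 2 → ℂ), IsRootLabelling r σ x u ∧ DistinctRoots u ∧
      (∀ i, r (σ i) = r i) ∧ paired = fun i j => σ i = j := by
  obtain ⟨c, u, hc, hu, hxu, hpair⟩ := hx
  have hconj : C c * rootProduct r u = C (conj c) * rootProduct r (star u) := by
    rw [← hxu, ← map_conj_complexForm x, hxu, map_mul, map_C, map_conj_rootProduct]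
  obtain ⟨σ, hσ⟩ := exists_perm_of_rootProduct_eq hr hu
    (fun i => star_ne_zero.2 (hu.ne_zero i)) hc ((map_ne_zero _).2 hc) hconj
  have hstar (i : ι) : bracket (star (u i)) (u (σ i)) = 0 := by
    have h := bracket_star_star (u i) (star (u (σ i)))
    rwa [star_star, ← Pi.star_apply, (hσ i).1, map_zero] at h
  refine ⟨σ, u, ⟨hu.ne_zero, hstar, c, hc, hxu⟩, hu, fun i => (hσ i).2, ?_⟩
  ext i j
  rw [hpair, hu.bracket_star_eq_zero_iff hstar]

end Stratum

section ConjInvariant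

variable {ι : Type*}

/-- The form `∏ lin (u i) ^ r i` is fixed by complex conjugation, for a visible reason:
conjugation permutes the vectors `u i` by `σ`, which preserves the multiplicities. The vectors
themselves are permuted, not only the points of the projective line they represent. -/
structure ConjInvariant (r : ι → ℕ) (σ : Equiv.Perm ι) (u : ι → Fin 2 → ℂ) : Prop where
  star_root : ∀ i, star (u i) = u (σ i)
  mult : ∀ i, r (σ i) = r i

lemma ConjInvariant.involutive {r : ι → ℕ} {σ : Equiv.Perm ι} {u : ι → Fin 2 → ℂ}
    (hs : ConjInvariant r σ u) (hu : DistinctRoots u) : Function.Involutive σ := fun i =>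
  hu.eq_of_bracket_eq_zero <| by rw [← hs.star_root, ← hs.star_root, star_star, bracket_self]

variable [Fintype ι] {d : ℕ} {r : ι → ℕ} {σ : Equiv.Perm ι} {x : Fin (d + 1) → ℝ}
  {u : ι → Fin 2 → ℂ}

lemma ConjInvariant.map_conj_rootProduct (hs : ConjInvariant r σ u) :
    MvPolynomial.map (starRingEnd ℂ) (rootProduct r u) = rootProduct r u := by
  rw [_root_.map_conj_rootProduct, ← rootProduct_comp_perm r hs.mult u]
  exact congrArg (rootProduct r) (funext hs.star_root)

lemma ConjInvariant.exists_real_scale (hs : ConjInvariant r σ u) (hu : ∀ i, u i ≠ 0)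
    {c : ℂ} (hx : complexForm x = C c * rootProduct r u) : ∃ s : ℝ, (s : ℂ) = c := by
  have hconj := map_conj_complexForm x
  rw [hx, map_mul, map_C, hs.map_conj_rootProduct] at hconj
  exact ⟨c.re, Complex.conj_eq_iff_re.1
    (C_injective _ _ (mul_right_cancel₀ (rootProduct_ne_zero r hu) hconj))⟩

/-- The last nonzero coordinate of a nonzero vector. -/
def pivot (a : Fin 2 → ℂ) : ℂ := if a 1 = 0 then a 0 else a 1

/-- The representative with last nonzero coordinate `1` of a point of the projective line. -/
def affineRep (a : Fin 2 → ℂ) : Fin 2 → ℂ := (pivot a)⁻¹ • a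

lemma pivot_ne_zero {a : Fin 2 → ℂ} (ha : a ≠ 0) : pivot a ≠ 0 := by
  by_cases h : a 1 = 0
  · contrapose! ha
    ext i; fin_cases i
    exacts [by rwa [pivot, if_pos h] at ha, h]
  · rwa [pivot, if_neg h]

lemma star_affineRep (a : Fin 2 → ℂ) : star (affineRep a) = affineRep (star a) := by
  have hpivot : pivot (star a) = star (pivot a) := by
    simp only [pivot, Pi.star_apply, star_eq_zero]; split_ifs <;> rfl
  rw [affineRep, affineRep, hpivot, star_smul, star_inv₀]

lemma affineRep_eq_of_bracket_eq_zero {a b : Fin 2 → ℂ} (ha : a ≠ 0) (hb : b ≠ 0)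
    (h : bracket a b = 0) : affineRep b = affineRep a := by
  obtain ⟨l, hl, rfl⟩ := exists_ne_zero_smul_of_bracket_eq_zero ha hb h
  have hpivot : pivot (l • a) = l * pivot a := by simp [pivot, hl]
  rw [affineRep, affineRep, hpivot, smul_smul, mul_inv_rev, inv_mul_cancel_right₀ hl]

lemma exists_conjInvariant_of_mem_rootStratum (hr : ∀ i, 0 < r i) {paired : ι → ι → Prop}
    (hx : x ∈ rootStratum d r paired) :
    ∃ (σ : Equiv.Perm ι) (s : ℝ) (u : ι → Fin 2 → ℂ), s ≠ 0 ∧ DistinctRoots u ∧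
      ConjInvariant r σ u ∧ complexForm x = C (s : ℂ) * rootProduct r u ∧
      paired = fun i j => σ i = j := by
  obtain ⟨σ, u, hlabel, hu, hσ, hpair⟩ := exists_isRootLabelling_of_mem_rootStratum hr hx
  have hpivot (i : ι) : (pivot (u i))⁻¹ ≠ 0 := inv_ne_zero (pivot_ne_zero (hu.ne_zero i))
  have hrep : DistinctRoots fun i => affineRep (u i) := hu.smul hpivot
  have hinv : ConjInvariant r σ fun i => affineRep (u i) :=
    { star_root := fun i => by
        rw [star_affineRep]
        exact (affineRep_eq_of_bracket_eq_zero (star_ne_zero.2 (hu.ne_zero i)) (hu.ne_zero _)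
          (hlabel.bracket_star i)).symm
      mult := hσ }
  obtain ⟨c, hc, hx⟩ := (hlabel.smul hpivot).exists_scale
  obtain ⟨s, rfl⟩ := hinv.exists_real_scale hrep.ne_zero hx
  exact ⟨σ, s, _, Complex.ofReal_ne_zero.1 hc, hrep, hinv, hx, hpair⟩

end ConjInvariant

section Chart

variable {ι : Type*} {σ : Equiv.Perm ι} {r : ι → ℕ} {u : ι → Fin 2 → ℂ}

/-- The real coordinates on the vectors `τ ∈ ℂ^ι` with `conj (τ i) = τ (σ i)`, chosen uniformly
for fixed points and two-cycles of the involution `σ`: `t i` is the sum of the real and the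
imaginary part of `τ i`. -/
def symmCoord (σ : Equiv.Perm ι) (t : ι → ℝ) (i : ι) : ℂ :=
  (1 + Complex.I) / 2 * t i + (1 - Complex.I) / 2 * t (σ i)

lemma conj_symmCoord (hσ : Function.Involutive σ) (t : ι → ℝ) (i : ι) :
    conj (symmCoord σ t i) = symmCoord σ t (σ i) := by
  simp only [symmCoord, hσ i, map_add, map_sub, map_mul, map_div₀, map_one, Complex.conj_I,
    Complex.conj_ofReal, Complex.conj_ofNat]
  ring

lemma re_add_im_symmCoord (t : ι → ℝ) (i : ι) :
    (symmCoord σ t i).re + (symmCoord σ t i).im = t i := by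
  have h : symmCoord σ t i =
      ⟨(t i + t (σ i)) / 2, (t i - t (σ i)) / 2⟩ := by
    rw [Complex.mk_eq_add_mul_I, symmCoord]; push_cast; ring
  rw [h]; ring

lemma symmCoord_re_add_im {τ : ι → ℂ} (hτ : ∀ i, conj (τ i) = τ (σ i)) :
    symmCoord σ (fun i => (τ i).re + (τ i).im) = τ := by
  ext i
  conv_rhs => rw [← Complex.re_add_im (τ i)]
  simp only [symmCoord, ← hτ i, Complex.conj_re, Complex.conj_im]
  push_cast
  ring

lemma symmCoord_smul (ε : ℝ) (t : ι → ℝ) : symmCoord σ (ε • t) = (ε : ℂ) • symmCoord σ t := by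
  ext i
  simp only [symmCoord, Pi.smul_apply, smul_eq_mul, Complex.ofReal_mul]
  ring

lemma symmCoord_zero : symmCoord σ 0 = 0 := by
  ext i; simp [symmCoord]

/-- The vectors `u i` moved in the transverse directions `perp (u i)`. -/
def movedRoots (u : ι → Fin 2 → ℂ) (τ : ι → ℂ) (i : ι) : Fin 2 → ℂ := u i + τ i • perp (u i)

lemma movedRoots_zero (u : ι → Fin 2 → ℂ) : movedRoots u 0 = u := by
  ext i; simp [movedRoots]

lemma bracket_movedRoots (u : ι → Fin 2 → ℂ) (τ : ι → ℂ) (i : ι) (v : Fin 2 → ℂ) :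
    bracket (movedRoots u τ i) v = bracket (u i) v + τ i * bracket (perp (u i)) v := by
  rw [movedRoots, bracket_add_left, bracket_smul_left]

lemma tendsto_movedRoots {α : Type*} {l : Filter α} {τ : α → ι → ℂ} (hτ : Tendsto τ l (𝓝 0)) :
    Tendsto (fun p => movedRoots u (τ p)) l (𝓝 u) := by
  have hcont : Continuous (movedRoots u) := by unfold movedRoots; fun_prop
  have h := (hcont.tendsto 0).comp hτ
  rwa [movedRoots_zero] at h

lemma ConjInvariant.movedRoots (hs : ConjInvariant r σ u) {τ : ι → ℂ}
    (hτ : ∀ i, conj (τ i) = τ (σ i)) : ConjInvariant r σ (movedRoots u τ) where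
  star_root i := by
    rw [_root_.movedRoots, _root_.movedRoots, star_add, star_smul, ← perp_star, hs.star_root,
      ← hτ]
    rfl
  mult := hs.mult

variable [Fintype ι] {d : ℕ}

/-- The chart of the root-type stratum around the form `C s * rootProduct r u`: its parameters are
the scale and the real coordinates of the displacements of the roots. -/
def stratumChart (d : ℕ) (r : ι → ℕ) (σ : Equiv.Perm ι) (u : ι → Fin 2 → ℂ)
    (p : ℝ × (ι → ℝ)) : Fin (d + 1) → ℝ :=
  realCoeffs d (C (p.1 : ℂ) * rootProduct r (movedRoots u (symmCoord σ p.2)))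

lemma complexForm_stratumChart (hs : ConjInvariant r σ u) (hσ : Function.Involutive σ)
    (hd : ∑ i, r i = d) (p : ℝ × (ι → ℝ)) :
    complexForm (stratumChart d r σ u p) =
      C (p.1 : ℂ) * rootProduct r (movedRoots u (symmCoord σ p.2)) := by
  refine complexForm_realCoeffs ?_ ?_
  · simpa [hd] using (isHomogeneous_C _ (p.1 : ℂ)).mul
      (isHomogeneous_rootProduct r (movedRoots u (symmCoord σ p.2)))
  · rw [map_mul, map_C, Complex.conj_ofReal,
      (hs.movedRoots (conj_symmCoord hσ p.2)).map_conj_rootProduct]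

lemma evalForm_stratumChart (hs : ConjInvariant r σ u) (hσ : Function.Involutive σ)
    (hd : ∑ i, r i = d) (p : ℝ × (ι → ℝ)) (v : Fin 2 → ℂ) :
    evalForm v (stratumChart d r σ u p) =
      p.1 * ∏ i, (bracket (u i) v + symmCoord σ p.2 i * bracket (perp (u i)) v) ^ r i := by
  simp only [evalForm_apply, complexForm_stratumChart hs hσ hd, map_mul, eval_C, eval_rootProduct,
    bracket_movedRoots]

lemma contDiff_stratumChart (hs : ConjInvariant r σ u) (hσ : Function.Involutive σ)
    (hd : ∑ i, r i = d) {n : WithTop ℕ∞} : ContDiff ℝ n (stratumChart d r σ u) := by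
  refine contDiff_of_contDiff_evalForm fun v => ?_
  simp only [evalForm_stratumChart hs hσ hd, symmCoord]
  have hofReal : ContDiff ℝ n ((↑) : ℝ → ℂ) := Complex.ofRealCLM.contDiff
  fun_prop

end Chart

section Immersion

variable {ι : Type*} [Fintype ι] {σ : Equiv.Perm ι} {r : ι → ℕ}
  {u : ι → Fin 2 → ℂ} {d : ℕ}

lemma hasDerivAt_mul_prod_pow [DecidableEq ι] (hr : ∀ i, 0 < r i) (s q : ℂ) (A B : ι → ℂ) :
    HasDerivAt (fun ε : ℝ => (s + ε * q) * ∏ i, (A i + ε * B i) ^ r i)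
      ((∏ i, A i ^ (r i - 1)) *
        (q * ∏ i, A i + s * ∑ i, r i * B i * ∏ j ∈ Finset.univ.erase i, A j)) 0 := by
  have hline (a b : ℂ) : HasDerivAt (fun ε : ℝ => a + ε * b) b 0 := by
    simpa using ((Complex.ofRealCLM.hasDerivAt (x := 0)).mul_const b).const_add a
  have hderiv := (hline s q).mul (HasDerivAt.fun_finsetProd fun i (_ : i ∈ Finset.univ) =>
    (hline (A i) (B i)).fun_pow (r i))
  refine hderiv.congr_deriv ?_
  have hpow (t : Finset ι) : ∏ i ∈ t, A i ^ r i = (∏ i ∈ t, A i ^ (r i - 1)) * ∏ i ∈ t, A i := by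
    rw [← Finset.prod_mul_distrib]
    exact Finset.prod_congr rfl fun i _ => (pow_sub_one_mul (hr i).ne' (A i)).symm
  simp only [Complex.ofReal_zero, zero_mul, add_zero, hpow, mul_add, Finset.mul_sum, smul_eq_mul]
  congr 1
  · ring
  · refine Finset.sum_congr rfl fun i hi => ?_
    rw [← Finset.mul_prod_erase _ (fun i => A i ^ (r i - 1)) hi]
    ring

/-- The derivative of `(s + ε * q) * ∏ lin (u i + ε • δ i • perp (u i)) ^ r i` at `ε = 0`, divided
by the common factor `∏ lin (u i) ^ (r i - 1)`. -/
def reducedTangent [DecidableEq ι] (r : ι → ℕ) (u : ι → Fin 2 → ℂ) (s q : ℂ) (δ : ι → ℂ) :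
    MvPolynomial (Fin 2) ℂ :=
  C q * rootProduct 1 u + C s * ∑ i, C (r i * δ i) * lin (perp (u i) 0) (perp (u i) 1) *
    ∏ j ∈ Finset.univ.erase i, lin (u j 0) (u j 1)

lemma eq_zero_of_reducedTangent_eq_zero [DecidableEq ι] (hr : ∀ i, 0 < r i)
    (hu : DistinctRoots u) {s q : ℂ} (hs : s ≠ 0) {δ : ι → ℂ} (h : reducedTangent r u s q δ = 0) :
    q = 0 ∧ δ = 0 := by
  have hδ : δ = 0 := by
    ext i
    have hi := congrArg (eval (u i)) h
    simp only [reducedTangent, map_add, map_mul, map_sum, map_prod, eval_C, eval_rootProduct,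
      eval_lin, map_zero, Pi.one_apply, pow_one] at hi
    rw [Finset.prod_eq_zero (Finset.mem_univ i) (bracket_self _), mul_zero, zero_add,
      Finset.sum_eq_single_of_mem i (Finset.mem_univ i) fun j _ hji => by
        rw [Finset.prod_eq_zero (Finset.mem_erase.2 ⟨hji.symm, Finset.mem_univ i⟩)
          (bracket_self _), mul_zero]] at hi
    have hperp : bracket (perp (u i)) (u i) ≠ 0 := fun h0 =>
      bracket_perp_ne_zero (hu.ne_zero i) (bracket_eq_zero_comm.1 h0)
    have hothers : ∏ j ∈ Finset.univ.erase i, bracket (u j) (u i) ≠ 0 :=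
      Finset.prod_ne_zero_iff.2 fun j hj => hu.bracket_ne_zero (Finset.ne_of_mem_erase hj)
    simpa [hs, hperp, hothers, (hr i).ne'] using hi
  refine ⟨?_, hδ⟩
  simpa [reducedTangent, hδ, rootProduct_ne_zero 1 hu.ne_zero] using h

lemma injective_fderiv_stratumChart (hr : ∀ i, 0 < r i) (hu : DistinctRoots u)
    (hs : ConjInvariant r σ u) (hd : ∑ i, r i = d) {s : ℝ} (hs₀ : s ≠ 0) :
    Function.Injective (fderiv ℝ (stratumChart d r σ u) (s, 0)) := by
  classical
  have hσ := hs.involutive hu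
  refine (injective_iff_map_eq_zero _).2 fun q hq => ?_
  have htangent : rootProduct (fun i => r i - 1) u *
      reducedTangent r u s q.1 (symmCoord σ q.2) = 0 := by
    refine MvPolynomial.funext fun v => ?_
    have hline : HasDerivAt (fun ε : ℝ => ((s, 0) : ℝ × (ι → ℝ)) + ε • q) q 0 := by
      simpa using ((hasDerivAt_id (0 : ℝ)).smul_const q).const_add ((s, 0) : ℝ × (ι → ℝ))
    have hchart : HasFDerivAt (stratumChart d r σ u) (fderiv ℝ (stratumChart d r σ u) (s, 0))
        (((s, 0) : ℝ × (ι → ℝ)) + (0 : ℝ) • q) := by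
      rw [zero_smul, add_zero]
      exact ((contDiff_stratumChart hs hσ hd (n := 1)).differentiable one_ne_zero _).hasFDerivAt
    have hcurve := (evalForm v).hasFDerivAt.comp_hasDerivAt (0 : ℝ)
      (hchart.comp_hasDerivAt (0 : ℝ) hline)
    rw [hq, map_zero] at hcurve
    refine (HasDerivAt.unique ?_ hcurve :)
    refine ((hasDerivAt_mul_prod_pow hr s q.1 (fun i => bracket (u i) v)
      fun i => symmCoord σ q.2 i * bracket (perp (u i)) v).congr_deriv ?_).congr_of_eventuallyEq ?_
    · simp [reducedTangent, eval_rootProduct, eval_lin, mul_assoc]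
    · refine .of_forall fun ε => ?_
      simp [evalForm_stratumChart hs hσ hd, symmCoord_smul, mul_assoc]
  obtain ⟨hq₁, hq₂⟩ := eq_zero_of_reducedTangent_eq_zero hr hu (Complex.ofReal_ne_zero.2 hs₀)
    ((mul_eq_zero.1 htangent).resolve_left (rootProduct_ne_zero _ hu.ne_zero))
  ext i
  · exact Complex.ofReal_eq_zero.1 hq₁
  · rw [← re_add_im_symmCoord (σ := σ) q.2 i, hq₂]
    simp

end Immersion

section RootCoord

variable {a b : Fin 2 → ℂ}

/-- The coordinate of the point `b` of the projective line in the affine chart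
`t ↦ a + t • perp a` centred at `a`. -/
def rootCoord (a b : Fin 2 → ℂ) : ℂ := bracket a b / bracket b (perp a)

lemma rootCoord_smul {t : ℂ} (ht : t ≠ 0) (a b : Fin 2 → ℂ) :
    rootCoord a (t • b) = rootCoord a b := by
  rw [rootCoord, rootCoord, bracket_smul_left, bracket_smul_right, mul_div_mul_left _ _ ht]

lemma rootCoord_star (a b : Fin 2 → ℂ) : rootCoord (star a) (star b) = conj (rootCoord a b) := by
  rw [rootCoord, rootCoord, perp_star, bracket_star_star, bracket_star_star, map_div₀]

lemma add_rootCoord_smul_perp (h : bracket b (perp a) ≠ 0) :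
    a + rootCoord a b • perp a = (bracket a (perp a) / bracket b (perp a)) • b := by
  rw [div_eq_inv_mul, mul_smul, bracket_smul_eq_add a (perp a) b, smul_add, inv_smul_smul₀ h,
    smul_smul, rootCoord, div_eq_inv_mul]

lemma bracket_perp_ne_zero_of_bracket_eq_zero (ha : a ≠ 0) (hb : b ≠ 0) (h : bracket a b = 0) :
    bracket b (perp a) ≠ 0 := fun h' =>
  bracket_perp_ne_zero ha (bracket_eq_zero_trans hb h h')

lemma tendsto_rootCoord (ha : a ≠ 0) (hb : b ≠ 0) (h : bracket a b = 0) :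
    Tendsto (rootCoord a) (𝓝 b) (𝓝 0) := by
  have hnum : Tendsto (bracket a) (𝓝 b) (𝓝 0) := by
    rw [← h]
    exact (continuous_bracket.comp (Continuous.prodMk_right a)).tendsto b
  have hden : Tendsto (fun w => bracket w (perp a)) (𝓝 b) (𝓝 (bracket b (perp a))) :=
    (continuous_bracket.comp (Continuous.prodMk_left (perp a))).tendsto b
  simpa [rootCoord] using! hnum.div hden (bracket_perp_ne_zero_of_bracket_eq_zero ha hb h)

end RootCoord

section Convergence

variable {ι : Type*} [Fintype ι] {d : ℕ} {r : ι → ℕ} {σ : Equiv.Perm ι}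
  {x x₀ : Fin (d + 1) → ℝ} {u w : ι → Fin 2 → ℂ}

lemma exists_tendsto_scale {l : Filter (Fin (d + 1) → ℝ)} [l.NeBot] (hl : l ≤ 𝓝 x₀)
    {c : (Fin (d + 1) → ℝ) → ℂ} {w : (Fin (d + 1) → ℝ) → ι → Fin 2 → ℂ} {a : ι → Fin 2 → ℂ}
    (ha : ∀ i, a i ≠ 0) (hw : Tendsto w l (𝓝 a))
    (hx : ∀ᶠ x in l, complexForm x = C (c x) * rootProduct r (w x)) :
    ∃ c₀, Tendsto c l (𝓝 c₀) ∧ complexForm x₀ = C c₀ * rootProduct r a := by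
  have hform (v : Fin 2 → ℂ) : Tendsto (fun x => evalForm v x) l (𝓝 (evalForm v x₀)) :=
    ((evalForm v).continuous.tendsto x₀).mono_left hl
  have hprod (v : Fin 2 → ℂ) :
      Tendsto (fun x => eval v (rootProduct r (w x))) l (𝓝 (eval v (rootProduct r a))) :=
    ((continuous_eval_rootProduct r v).tendsto a).comp hw
  obtain ⟨v, hv⟩ := exists_eval_rootProduct_ne_zero r ha
  have hc : Tendsto c l (𝓝 (evalForm v x₀ / eval v (rootProduct r a))) := by
    refine ((hform v).div (hprod v) hv).congr' ?_
    filter_upwards [hx, (hprod v).eventually_ne hv] with x hx hne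
    rw [Pi.div_apply, evalForm_apply, hx, map_mul, eval_C, mul_div_cancel_right₀ _ hne]
  refine ⟨_, hc, MvPolynomial.funext fun v' => ?_⟩
  rw [map_mul, eval_C, ← evalForm_apply]
  refine tendsto_nhds_unique (hform v') ((hc.mul (hprod v')).congr' ?_)
  filter_upwards [hx] with x hx
  rw [evalForm_apply, hx, map_mul, eval_C]

lemma IsRootLabelling.of_tendsto {l : Filter (Fin (d + 1) → ℝ)} [l.NeBot] (hl : l ≤ 𝓝 x₀)
    (hx₀ : complexForm x₀ ≠ 0) {w : (Fin (d + 1) → ℝ) → ι → Fin 2 → ℂ} {a : ι → Fin 2 → ℂ}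
    (ha : ∀ i, a i ≠ 0) (hw : Tendsto w l (𝓝 a)) (h : ∀ᶠ x in l, IsRootLabelling r σ x (w x)) :
    IsRootLabelling r σ x₀ a where
  ne_zero := ha
  bracket_star i := by
    have hbracket : Continuous fun w : ι → Fin 2 → ℂ => bracket (star (w i)) (w (σ i)) := by
      unfold bracket; fun_prop
    exact tendsto_nhds_unique (((hbracket.tendsto a).comp hw).congr'
      (h.mono fun x hx => hx.bracket_star i)) tendsto_const_nhds
  exists_scale := by
    obtain ⟨c, hc⟩ := (h.mono fun x hx => hx.exists_scale).choice
    obtain ⟨c₀, -, hx⟩ := exists_tendsto_scale hl ha hw (hc.mono fun x hx => hx.2)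
    refine ⟨c₀, ?_, hx⟩
    rintro rfl
    exact hx₀ (by rw [hx, C_0, zero_mul])

lemma exists_isRootLabelling_norm_eq_one
    (hx : x ∈ rootStratum d r fun i j => σ i = j) :
    ∃ w, IsRootLabelling r σ x w ∧ ∀ i, ‖w i‖ = 1 := by
  obtain ⟨c, w, hc, hw, hxw, hpair⟩ := hx
  have h : IsRootLabelling r σ x w := ⟨hw.ne_zero, fun i => (hpair i _).1 rfl, c, hc, hxw⟩
  have hnorm (i : ι) : ‖w i‖ ≠ 0 := norm_ne_zero_iff.2 (hw.ne_zero i)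
  refine ⟨_, h.smul (α := fun i => (‖w i‖ : ℂ)⁻¹) fun i => inv_ne_zero (mod_cast hnorm i),
    fun i => ?_⟩
  rw [norm_smul, norm_inv, Complex.norm_real, norm_norm, inv_mul_cancel₀ (hnorm i)]

/-- Along an ultrafilter, compactness of the projective line makes the roots converge. -/
lemma exists_tendsto_isRootLabelling (hr : ∀ i, 0 < r i) (hu : DistinctRoots u)
    (h : IsRootLabelling r σ x₀ u) {l : Ultrafilter (Fin (d + 1) → ℝ)}
    (hl : ↑l ≤ 𝓝[rootStratum d r fun i j => σ i = j] x₀) :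
    ∃ (w : (Fin (d + 1) → ℝ) → ι → Fin 2 → ℂ) (a : ι → Fin 2 → ℂ),
      (∀ i, a i ≠ 0) ∧ (∀ i, bracket (u i) (a i) = 0) ∧ Tendsto w l (𝓝 a) ∧
      ∀ᶠ x in l, IsRootLabelling r σ x (w x) := by
  have hl₀ : ↑l ≤ 𝓝 x₀ := hl.trans nhdsWithin_le_nhds
  have hmem : ∀ᶠ x in l, x ∈ rootStratum d r fun i j => σ i = j := hl self_mem_nhdsWithin
  obtain ⟨w, hw⟩ := (hmem.mono fun x hx => exists_isRootLabelling_norm_eq_one hx).choice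
  have hcompact : IsCompact (Set.univ.pi fun _ : ι => Metric.sphere (0 : Fin 2 → ℂ) 1) :=
    isCompact_univ_pi fun _ => isCompact_sphere 0 1
  obtain ⟨a, ha, hwa⟩ := hcompact.ultrafilter_le_nhds (l.map w) <| le_principal_iff.2 <|
    hw.mono fun x hx i _ => mem_sphere_zero_iff_norm.2 (hx.2 i)
  have ha₀ (i : ι) : a i ≠ 0 := ne_zero_of_mem_unit_sphere ⟨a i, ha i trivial⟩
  have hlabel : ∀ᶠ x in l, IsRootLabelling r σ x (w x) := hw.mono fun x hx => hx.1
  have hlimit := IsRootLabelling.of_tendsto hl₀ h.complexForm_ne_zero ha₀ hwa hlabel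
  obtain ⟨ρ, hρ, hrρ, hσρ⟩ := h.exists_perm hr hu hlimit
  refine ⟨fun x => w x ∘ ρ, a ∘ ρ, fun i => ha₀ (ρ i), hρ, ?_,
    hlabel.mono fun x hx => hx.comp_perm hrρ hσρ⟩
  exact tendsto_pi_nhds.2 fun i => (tendsto_pi_nhds.1 hwa) (ρ i)

end Convergence

section LocalChart

variable {ι : Type*} [Fintype ι] {d : ℕ} {r : ι → ℕ} {σ : Equiv.Perm ι}
  {x x₀ : Fin (d + 1) → ℝ} {u w : ι → Fin 2 → ℂ} {s : ℝ}

lemma stratumChart_center (hs : ConjInvariant r σ u) (hσ : Function.Involutive σ)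
    (hd : ∑ i, r i = d) (hx : complexForm x = C (s : ℂ) * rootProduct r u) :
    stratumChart d r σ u (s, 0) = x :=
  complexForm_injective <| by
    rw [complexForm_stratumChart hs hσ hd, symmCoord_zero, movedRoots_zero, hx]

lemma stratumChart_mem_rootStratum (hs : ConjInvariant r σ u) (hσ : Function.Involutive σ)
    (hd : ∑ i, r i = d) {p : ℝ × (ι → ℝ)} (hp : p.1 ≠ 0)
    (hdist : DistinctRoots (movedRoots u (symmCoord σ p.2))) :
    stratumChart d r σ u p ∈ rootStratum d r fun i j => σ i = j := by
  have hmoved := hs.movedRoots (conj_symmCoord hσ p.2)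
  refine ⟨p.1, _, Complex.ofReal_ne_zero.2 hp, hdist, complexForm_stratumChart hs hσ hd p,
    fun i j => (hdist.bracket_star_eq_zero_iff (fun i => ?_) i j).symm⟩
  rw [hmoved.star_root, bracket_self]

lemma tendsto_stratumChart (hu : DistinctRoots u) (hs : ConjInvariant r σ u) (hd : ∑ i, r i = d)
    (hs₀ : s ≠ 0) :
    Tendsto (stratumChart d r σ u) (𝓝 (s, 0))
      (𝓝[rootStratum d r fun i j => σ i = j] stratumChart d r σ u (s, 0)) := by
  have hσ := hs.involutive hu
  have hroots : Tendsto (fun p : ℝ × (ι → ℝ) => movedRoots u (symmCoord σ p.2)) (𝓝 (s, 0))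
      (𝓝 u) := by
    refine tendsto_movedRoots ?_
    have hcont : Continuous fun p : ℝ × (ι → ℝ) => symmCoord σ p.2 := by
      unfold symmCoord; fun_prop
    simpa only [symmCoord_zero] using hcont.tendsto (s, 0)
  refine tendsto_nhdsWithin_iff.2
    ⟨(contDiff_stratumChart hs hσ hd (n := 0)).continuous.tendsto _, ?_⟩
  filter_upwards [hroots.eventually hu.eventually, continuousAt_fst.eventually_ne hs₀]
    with p hdist hp using stratumChart_mem_rootStratum hs hσ hd hp hdist

lemma eq_stratumChart (hs : ConjInvariant r σ u) (hσ : Function.Involutive σ) (hd : ∑ i, r i = d)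
    {τ : ι → ℂ} (hτ : ∀ i, conj (τ i) = τ (σ i))
    (hx : complexForm x = C (s : ℂ) * rootProduct r (movedRoots u τ)) :
    stratumChart d r σ u (s, fun i => (τ i).re + (τ i).im) = x :=
  complexForm_injective <| by
    rw [complexForm_stratumChart hs hσ hd, symmCoord_re_add_im hτ, hx]

lemma IsRootLabelling.conj_rootCoord (h : IsRootLabelling r σ x w) (hs : ConjInvariant r σ u)
    (i : ι) : conj (rootCoord (u i) (w i)) = rootCoord (u (σ i)) (w (σ i)) := by
  obtain ⟨l, hl, hw⟩ := exists_ne_zero_smul_of_bracket_eq_zero (star_ne_zero.2 (h.ne_zero i))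
    (h.ne_zero (σ i)) (h.bracket_star i)
  rw [hw, rootCoord_smul hl, ← hs.star_root, rootCoord_star]

lemma IsRootLabelling.exists_scale_movedRoots (h : IsRootLabelling r σ x w)
    (hu : ∀ i, u i ≠ 0) (hs : ConjInvariant r σ u)
    (hperp : ∀ i, bracket (w i) (perp (u i)) ≠ 0) :
    ∃ s : ℝ, complexForm x =
      C (s : ℂ) * rootProduct r (movedRoots u fun i => rootCoord (u i) (w i)) := by
  have hmoved : IsRootLabelling r σ x (movedRoots u fun i => rootCoord (u i) (w i)) := by
    have hrescale := h.smul fun i =>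
      div_ne_zero (bracket_perp_ne_zero (hu i)) (hperp i)
    convert hrescale using 2 with i
    exact add_rootCoord_smul_perp (hperp i)
  obtain ⟨c, -, hx⟩ := hmoved.exists_scale
  obtain ⟨s, rfl⟩ := (hs.movedRoots (h.conj_rootCoord hs)).exists_real_scale hmoved.ne_zero hx
  exact ⟨s, hx⟩

theorem map_stratumChart_nhds (hr : ∀ i, 0 < r i) (hu : DistinctRoots u)
    (hs : ConjInvariant r σ u) (hs₀ : s ≠ 0) (hx₀ : complexForm x₀ = C (s : ℂ) * rootProduct r u) :
    map (stratumChart d r σ u) (𝓝 (s, 0)) = 𝓝[rootStratum d r fun i j => σ i = j] x₀ := by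
  have hs₀' : (s : ℂ) ≠ 0 := Complex.ofReal_ne_zero.2 hs₀
  have hσ := hs.involutive hu
  have hd : ∑ i, r i = d := sum_mult_eq_degree hu.ne_zero hs₀' hx₀
  have hcenter : stratumChart d r σ u (s, 0) = x₀ := stratumChart_center hs hσ hd hx₀
  have hlabel : IsRootLabelling r σ x₀ u :=
    ⟨hu.ne_zero, fun i => by rw [hs.star_root, bracket_self], s, hs₀', hx₀⟩
  refine le_antisymm (hcenter ▸ tendsto_stratumChart hu hs hd hs₀) ?_
  refine le_iff_ultrafilter.2 fun l hl => ?_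
  obtain ⟨w, a, ha, hua, hwa, hw⟩ := exists_tendsto_isRootLabelling hr hu hlabel hl
  have hwa_i (i : ι) : Tendsto (fun x => w x i) l (𝓝 (a i)) := tendsto_pi_nhds.1 hwa i
  let τ (x : Fin (d + 1) → ℝ) (i : ι) : ℂ := rootCoord (u i) (w x i)
  have hτ : Tendsto τ l (𝓝 0) := tendsto_pi_nhds.2 fun i =>
    (tendsto_rootCoord (hu.ne_zero i) (ha i) (hua i)).comp (hwa_i i)
  have hperp : ∀ᶠ x in l, ∀ i, bracket (w x i) (perp (u i)) ≠ 0 := eventually_all.2 fun i =>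
    ((continuous_bracket.tendsto _).comp ((hwa_i i).prodMk_nhds tendsto_const_nhds)).eventually_ne
      (bracket_perp_ne_zero_of_bracket_eq_zero (hu.ne_zero i) (ha i) (hua i))
  obtain ⟨s', hs'⟩ := ((hw.and hperp).mono fun x hx =>
    hx.1.exists_scale_movedRoots hu.ne_zero hs hx.2).choice
  obtain ⟨c₀, hc₀, hx₀'⟩ := exists_tendsto_scale (c := fun x => (s' x : ℂ))
    (hl.trans nhdsWithin_le_nhds) hu.ne_zero (tendsto_movedRoots hτ) hs'
  obtain rfl : c₀ = s := C_injective _ _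
    (mul_right_cancel₀ (rootProduct_ne_zero r hu.ne_zero) (hx₀'.symm.trans hx₀))
  have hscale : Tendsto s' l (𝓝 s) := (Complex.continuous_re.tendsto _).comp hc₀
  have hcoord : Tendsto (fun x i => (τ x i).re + (τ x i).im) l (𝓝 0) := by
    have hcont : Continuous fun (τ : ι → ℂ) i => (τ i).re + (τ i).im := by fun_prop
    simpa using! (hcont.tendsto 0).comp hτ
  have hparam := tendsto_map (f := stratumChart d r σ u) |>.comp (hscale.prodMk_nhds hcoord)
  refine tendsto_id'.1 (hparam.congr' ?_)
  filter_upwards [hw, hs'] with x hx hxs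
  exact eq_stratumChart hs hσ hd (hx.conj_rootCoord hs) hxs

end LocalChart

section Parametrization

lemma exists_nhds_injOn_of_hasStrictFDerivAt {𝕜 E F : Type*} [NontriviallyNormedField 𝕜]
    [CompleteSpace 𝕜] [NormedAddCommGroup E] [NormedSpace 𝕜 E] [FiniteDimensional 𝕜 E]
    [NormedAddCommGroup F] [NormedSpace 𝕜 F] {f : E → F} {f' : E →L[𝕜] F} {p₀ : E}
    (hf : HasStrictFDerivAt f f' p₀) (hinj : Function.Injective f') :
    ∃ N ∈ 𝓝 p₀, Set.InjOn f N := by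
  obtain ⟨K, hK₀, hK⟩ := f'.toLinearMap.exists_antilipschitzWith (LinearMap.ker_eq_bot.2 hinj)
  obtain ⟨N, hN, happrox⟩ := hf.approximates_deriv_on_nhds (c := K⁻¹ / 2) (.inr (by positivity))
  have hanti := (hK.domRestrict N).add_lipschitzWith happrox.lipschitz_sub
    (half_lt_self (inv_pos.2 hK₀))
  refine ⟨N, hN, Set.injOn_iff_injective.2 ?_⟩
  convert! hanti.injective
  simp [Set.domRestrict]

lemma exists_isOpen_image_eq_inter {X Y : Type*} [TopologicalSpace X] [TopologicalSpace Y]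
    {f : X → Y} (hf : Continuous f) {p₀ : X} {S : Set Y} (hmap : map f (𝓝 p₀) = 𝓝[S] f p₀)
    {N : Set X} (hN : N ∈ 𝓝 p₀) :
    ∃ U ⊆ N, ∃ V, IsOpen U ∧ IsOpen V ∧ p₀ ∈ U ∧ f p₀ ∈ V ∧ f '' U = S ∩ V := by
  have hS : f ⁻¹' S ∈ 𝓝 p₀ := by
    rw [← mem_map, hmap]
    exact self_mem_nhdsWithin
  obtain ⟨W, hWN, hWo, hpW⟩ := mem_nhds_iff.1 (inter_mem hN hS)
  have hfW : f '' W ∈ 𝓝[S] f p₀ := hmap ▸ image_mem_map (hWo.mem_nhds hpW)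
  obtain ⟨V, hVo, hpV, hVW⟩ := mem_nhdsWithin.1 hfW
  refine ⟨W ∩ f ⁻¹' V, fun p hp => (hWN hp.1).1, V, hWo.inter (hVo.preimage hf), hVo,
    ⟨hpW, hpV⟩, hpV, ?_⟩
  rw [Set.image_inter_preimage]
  exact Set.Subset.antisymm
    (Set.inter_subset_inter_left V (Set.image_subset_iff.2 fun p hp => (hWN hp).2))
    fun y hy => ⟨hVW hy.symm, hy.2⟩

end Parametrization

theorem stratum_dimension_general {ι : Type*} [Fintype ι] {d : ℕ} {r : ι → ℕ} (hr : ∀ i, 0 < r i)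
    {paired : ι → ι → Prop} {x₀ : Fin (d + 1) → ℝ} (hx₀ : x₀ ∈ rootStratum d r paired)
    {E : Type*} [NormedAddCommGroup E] [NormedSpace ℝ E]
    (hE : Module.finrank ℝ E = Fintype.card ι + 1) :
    ∃ (f : E → (Fin (d + 1) → ℝ)) (U : Set E) (p₀ : E) (V : Set (Fin (d + 1) → ℝ)),
      IsOpen U ∧ IsOpen V ∧ p₀ ∈ U ∧ x₀ ∈ V ∧ f p₀ = x₀ ∧ ContDiffOn ℝ (⊤ : ℕ∞) f U ∧
      Set.InjOn f U ∧ f '' U = rootStratum d r paired ∩ V ∧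
      Function.Injective (fderiv ℝ f p₀) := by
  obtain ⟨σ, s, u, hs₀, hu, hs, hx, rfl⟩ := exists_conjInvariant_of_mem_rootStratum hr hx₀
  have hd : ∑ i, r i = d := sum_mult_eq_degree hu.ne_zero (Complex.ofReal_ne_zero.2 hs₀) hx
  have : FiniteDimensional ℝ E := Module.finite_of_finrank_pos (by omega)
  let e : E ≃L[ℝ] ℝ × (ι → ℝ) := .ofFinrankEq (by simp [hE, add_comm])
  let f : E → Fin (d + 1) → ℝ := stratumChart d r σ u ∘ e
  let p₀ : E := e.symm (s, 0)
  have he : e p₀ = (s, 0) := e.apply_symm_apply _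
  have hf {n : WithTop ℕ∞} : ContDiff ℝ n f :=
    (contDiff_stratumChart hs (hs.involutive hu) hd).comp e.contDiff
  have hmap : map f (𝓝 p₀) = 𝓝[rootStratum d r fun i j => σ i = j] x₀ := by
    rw [← map_map, e.map_nhds_eq, he, map_stratumChart_nhds hr hu hs hs₀ hx]
  have hcenter : f p₀ = x₀ :=
    (congrArg _ he).trans (stratumChart_center hs (hs.involutive hu) hd hx)
  have hderiv : Function.Injective (fderiv ℝ f p₀) := by
    rw [e.comp_right_fderiv, he]
    exact (injective_fderiv_stratumChart hr hu hs hd hs₀).comp e.injective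
  obtain ⟨N, hN, hinj⟩ := exists_nhds_injOn_of_hasStrictFDerivAt
    ((hf (n := 1)).contDiffAt.hasStrictFDerivAt one_ne_zero) hderiv
  obtain ⟨U, hUN, V, hU, hV, hpU, hpV, himage⟩ :=
    exists_isOpen_image_eq_inter (hf (n := 0)).continuous (hcenter.symm ▸ hmap) hN
  exact ⟨f, U, p₀, V, hU, hV, hpU, hcenter ▸ hpV, hcenter, hf.contDiffOn, hinj.mono hUN, himage,
    hderiv⟩

/-- if the nonzero octic v has exactly k = m distinct complex
projective roots, then its root-type stratum in V₈ ≅ ℝ⁹ is a smooth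
submanifold of dimension k + 1: through each of its points it is covered by an
injective smooth parametrization by k+1 real parameters which is immersive and
fills out a relative neighborhood in the stratum. -/
theorem stratum_dimension
    (m : ℕ) (r : Fin m → ℕ) (z w : Fin m → ℂ) (c : ℂ) (v : Fin 9 → ℝ)
    (hc : c ≠ 0) (hr : ∀ i, 0 < r i)
    (hnz : ∀ i, ¬(z i = 0 ∧ w i = 0))
    (hdist : ∀ i j, i ≠ j → z i * w j ≠ z j * w i)
    (hfac : mapC (polyOf v) = MvPolynomial.C c * ∏ i, (lin (z i) (w i)) ^ (r i)) :
    ∀ x0 ∈ stratum m r z w,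
      ∃ (f : (Fin (m + 1) → ℝ) → (Fin 9 → ℝ)) (U : Set (Fin (m + 1) → ℝ))
        (p0 : Fin (m + 1) → ℝ) (V : Set (Fin 9 → ℝ)),
        IsOpen U ∧ IsOpen V ∧ p0 ∈ U ∧ x0 ∈ V ∧ f p0 = x0 ∧
        ContDiffOn ℝ (⊤ : ℕ∞) f U ∧ Set.InjOn f U ∧
        f '' U = stratum m r z w ∩ V ∧
        Function.Injective (fderiv ℝ f p0) := by
  rw [stratum_eq_rootStratum]
  exact fun x0 hx0 => stratum_dimension_general hr hx0 (by simp)
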